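/- arXiv:0909.0978 — 2 statements merged into one kernel-verified Lean document; each statement's English description precedes it below -/
import Mathlib

section
/- Let r > 0 and 0 < b < r be real numbers, set c = 2·√(r·b), and let D = {x + iy ∈ ℂ : x²/(r+b)² + y²/(r−b)² ≤ 1} be the closed ellipse with semi-axes r+b and r−b. Then for every function f : ℂ → ℂ holomorphic on an open set containing D, the mean of f over D with respect to two-dimensional Lebesgue measure equals a semicircle average on the segment [−c, c]: (1/(π·(r²−b²))) · ∫_D f dA = (1/(2π·r·b)) · ∫_{−c}^{c} f(x)·√(c² − x²) dx. -/
open MeasureTheory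

/-!
Write `c = 2 √(r b)`. The real-linear map `w ↦ r w + b w̄` carries the unit disk onto the ellipse,
and on a circle `|w| = t` it is `t` times the Joukowski map `ω ↦ r ω + b ω⁻¹` at `ω = w / t`.
The Joukowski map is holomorphic on the annulus `c / (2 r) ≤ |ω| ≤ 1`, sends it into the ellipse,
and collapses its inner circle onto the focal segment `[-c, c]`. By Cauchy's theorem the average
of `f (r w + b w̄)` over `|w| = t` is therefore that of `f (c Re w)`. Integrating over `t` gives
the same equality over the unit disk, where the second integral only sees the vertical slices of
the disk, whose lengths are the semicircle density.
-/

section PlaneIntegrals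

open Complex Real Metric Set

variable {E : Type*} [NormedAddCommGroup E] [NormedSpace ℝ E] {f : ℂ → E}

theorem circleAverage_eq_integral_neg_pi_pi (c : ℂ) (R : ℝ) :
    circleAverage f c R = (2 * π)⁻¹ • ∫ θ in (-π)..π, f (circleMap c R θ) := by
  rw [circleAverage_eq_integral_add (-π),
    intervalIntegral.integral_comp_add_right (fun θ ↦ f (circleMap c R θ))]
  ring_nf

theorem integrableOn_polarCoord_target (hf : Integrable f) :
    IntegrableOn (fun p ↦ p.1 • f (Complex.polarCoord.symm p)) polarCoord.target := by
  have hf' : Integrable (f ∘ measurableEquivRealProd.symm) :=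
    (volume_preserving_equiv_real_prod.symm.integrable_comp_emb
      measurableEquivRealProd.symm.measurableEmbedding).2 hf
  have htarget : MeasurableSet polarCoord.target := polarCoord.open_target.measurableSet
  refine ((integrableOn_image_iff_integrableOn_abs_det_fderiv_smul volume htarget
    (fun p _ ↦ (hasFDerivAt_polarCoord_symm p).hasFDerivWithinAt) polarCoord.symm.injOn _).1
    hf'.integrableOn).congr_fun (fun p hp ↦ ?_) htarget
  simp only [det_fderivPolarCoordSymm, abs_of_pos (show 0 < p.1 from hp.1), Function.comp_apply,
    measurableEquivRealProd_symm_polarCoord_symm_apply]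

theorem integral_eq_integral_circleAverage_zero (hf : Integrable f) :
    ∫ z, f z = ∫ t in Ioi (0 : ℝ), (2 * π * t) • circleAverage f 0 t := by
  have hpolar := integrableOn_polarCoord_target hf
  rw [← Complex.integral_comp_polarCoord_symm]
  rw [polarCoord_target, Measure.volume_eq_prod] at hpolar ⊢
  rw [setIntegral_prod _ hpolar]
  congr! 2 with t
  have hcircle (θ : ℝ) : Complex.polarCoord.symm (t, θ) = circleMap 0 t θ := by
    simp [circleMap, exp_mul_I]
  simp only [hcircle]
  rw [integral_smul, ← integral_Ioc_eq_integral_Ioo,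
    ← intervalIntegral.integral_of_le (by linarith [pi_pos]),
    circleAverage_eq_integral_neg_pi_pi, smul_smul]
  congr 1
  field_simp

theorem integral_eq_integral_circleAverage (hf : Integrable f) (c : ℂ) :
    ∫ z, f z = ∫ t in Ioi (0 : ℝ), (2 * π * t) • circleAverage f c t := by
  rw [← integral_add_right_eq_self f c,
    integral_eq_integral_circleAverage_zero (hf.comp_add_right c)]
  simp only [circleAverage_map_add_const]

theorem setIntegral_closedBall_eq_integral_circleAverage {c : ℂ} {R : ℝ}
    (hf : IntegrableOn f (closedBall c R)) :
    ∫ z in closedBall c R, f z = ∫ t in Ioc 0 R, (2 * π * t) • circleAverage f c t := by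
  have hball : MeasurableSet (closedBall c R) := measurableSet_closedBall
  rw [← integral_indicator hball,
    integral_eq_integral_circleAverage ((integrable_indicator_iff hball).2 hf) c,
    ← Ioi_inter_Iic, ← setIntegral_indicator measurableSet_Iic]
  refine setIntegral_congr_fun measurableSet_Ioi fun t ht ↦ ?_
  have hnorm {z : ℂ} (hz : z ∈ sphere c |t|) : dist z c = t := by
    rw [mem_sphere.1 hz, abs_of_pos ht]
  by_cases htR : t ≤ R
  · rw [indicator_of_mem (mem_Iic.2 htR)]
    congr 1
    exact circleAverage_congr_sphere fun z hz ↦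
      indicator_of_mem (mem_closedBall.2 ((hnorm hz).trans_le htR)) f
  · rw [indicator_of_notMem (mt mem_Iic.1 htR)]
    have hzero : circleAverage ((closedBall c R).indicator f) c t = circleAverage 0 c t :=
      circleAverage_congr_sphere fun z hz ↦
        indicator_of_notMem (fun h : z ∈ closedBall c R ↦ htR ((hnorm hz).symm.trans_le h)) f
    simp [hzero, circleAverage_def]

theorem volume_real_setOf_sq_le (a : ℝ) : volume.real {y : ℝ | y ^ 2 ≤ a} = 2 * √a := by
  rcases le_or_gt 0 a with ha | ha
  · have hIcc : {y : ℝ | y ^ 2 ≤ a} = Icc (-√a) (√a) := Set.ext fun _ ↦ Real.sq_le ha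
    rw [hIcc, volume_real_Icc_of_le (by linarith [sqrt_nonneg a])]
    ring
  · have hempty : {y : ℝ | y ^ 2 ≤ a} = ∅ :=
      Set.eq_empty_of_forall_notMem fun y hy ↦ ((sq_nonneg y).trans hy).not_gt ha
    simp [hempty, sqrt_eq_zero_of_nonpos ha.le]

theorem integral_eq_integral_re_im (hf : Integrable f) :
    ∫ z, f z = ∫ x : ℝ, ∫ y : ℝ, f ⟨x, y⟩ := by
  have hmp := volume_preserving_equiv_real_prod.symm
  have hemb := measurableEquivRealProd.symm.measurableEmbedding
  have hf' := (hmp.integrable_comp_emb hemb).2 hf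
  rw [← hmp.integral_comp hemb]
  rw [Measure.volume_eq_prod] at hf' ⊢
  exact integral_prod _ hf'

theorem setIntegral_closedBall_comp_re [CompleteSpace E] {g : ℝ → E} {R : ℝ} (hR : 0 ≤ R)
    (hg : IntegrableOn (fun z : ℂ ↦ g z.re) (closedBall 0 R)) :
    ∫ z in closedBall (0 : ℂ) R, g z.re = ∫ x in (-R)..R, (2 * √(R ^ 2 - x ^ 2)) • g x := by
  have hball : MeasurableSet (closedBall (0 : ℂ) R) := measurableSet_closedBall
  have hslice (x : ℝ) : (fun y : ℝ ↦ (closedBall (0 : ℂ) R).indicator (fun z ↦ g z.re) ⟨x, y⟩) =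
      {y : ℝ | y ^ 2 ≤ R ^ 2 - x ^ 2}.indicator fun _ ↦ g x := by
    funext y
    have hmem : (⟨x, y⟩ : ℂ) ∈ closedBall (0 : ℂ) R ↔ y ^ 2 ≤ R ^ 2 - x ^ 2 := by
      rw [mem_closedBall_zero_iff, ← sq_le_sq₀ (norm_nonneg _) hR, ← normSq_eq_norm_sq,
        normSq_mk, le_sub_iff_add_le']
      ring_nf
    exact indicator_eq_indicator hmem rfl
  have hsupport : Function.support (fun x ↦ (2 * √(R ^ 2 - x ^ 2)) • g x) ⊆ Ioc (-R) R := by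
    intro x hx
    have hsqrt : √(R ^ 2 - x ^ 2) ≠ 0 := fun h ↦ hx (by simp [h])
    have hlt : x ^ 2 < R ^ 2 := sub_pos.1 (sqrt_ne_zero'.1 hsqrt)
    exact Ioo_subset_Ioc_self (abs_lt.1 (abs_lt_of_sq_lt_sq hlt hR))
  rw [intervalIntegral.integral_eq_integral_of_support_subset hsupport,
    ← integral_indicator hball, integral_eq_integral_re_im ((integrable_indicator_iff hball).2 hg)]
  refine integral_congr_ae (.of_forall fun x ↦ ?_)
  have hmeas : MeasurableSet {y : ℝ | y ^ 2 ≤ R ^ 2 - x ^ 2} :=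
    measurableSet_le (by fun_prop) measurable_const
  simp only [hslice, integral_indicator_const _ hmeas, volume_real_setOf_sq_le]

theorem setIntegral_closedBall_comp_mul_re [CompleteSpace E] {g : ℝ → E} {c : ℝ} (hc : 0 < c)
    (hg : ContinuousOn g (Icc (-c) c)) :
    ∫ w in closedBall (0 : ℂ) 1, g (c * w.re) =
      (2 / c ^ 2) • ∫ x in (-c)..c, √(c ^ 2 - x ^ 2) • g x := by
  have hint : IntegrableOn (fun z : ℂ ↦ g z.re) (closedBall 0 c) :=
    (hg.comp continuous_re.continuousOn fun z hz ↦ abs_le.1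
      ((abs_re_le_norm z).trans (mem_closedBall_zero_iff.1 hz))).integrableOn_compact
        (isCompact_closedBall 0 c)
  have hscale := Measure.setIntegral_comp_smul_of_pos volume (fun z : ℂ ↦ g z.re)
    (closedBall 0 1) hc
  simp only [smul_re, smul_eq_mul, finrank_real_complex, smul_unitClosedBall_of_nonneg hc.le,
    setIntegral_closedBall_comp_re hc.le hint, mul_smul, intervalIntegral.integral_smul] at hscale
  rw [hscale, smul_smul, inv_mul_eq_div]

end PlaneIntegrals

theorem circleAverage_eq_of_differentiableOn_annulus {E : Type*} [NormedAddCommGroup E]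
    [NormedSpace ℂ E] {f : ℂ → E} {c : ℂ} {ρ R : ℝ} (hρ : 0 < ρ) (hρR : ρ ≤ R)
    (hf : ContinuousOn f (Metric.closedBall c R \ Metric.ball c ρ))
    (hf' : DifferentiableOn ℂ f (Metric.ball c R \ Metric.closedBall c ρ)) :
    Real.circleAverage f c R = Real.circleAverage f c ρ := by
  have hopen : IsOpen (Metric.ball c R \ Metric.closedBall c ρ) :=
    Metric.isOpen_ball.sdiff Metric.isClosed_closedBall
  rw [Real.circleAverage_eq_circleIntegral (hρ.trans_le hρR).ne',
    Real.circleAverage_eq_circleIntegral hρ.ne',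
    Complex.circleIntegral_sub_center_inv_smul_eq_of_differentiable_on_annulus_off_countable
      hρ hρR Set.countable_empty hf
      fun z hz ↦ hf'.differentiableAt (hopen.mem_nhds hz.1)]

section Ellipse

open Complex ComplexConjugate Metric

/-- The quadratic form `(Re z)² / p² + (Im z)² / q²`, whose sublevel sets are the ellipses centred
at the origin with axes proportional to `p` and `q`. -/
noncomputable def ellipseForm (p q : ℝ) (z : ℂ) : ℝ :=
  z.re ^ 2 / p ^ 2 + z.im ^ 2 / q ^ 2

/-- The closed ellipse centred at the origin with semi-axes `p` along the real axis and `q` along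
the imaginary axis. -/
def closedEllipse (p q : ℝ) : Set ℂ :=
  {z | ellipseForm p q z ≤ 1}

/-- The real-linear map `w ↦ r w + b w̄`, used to parametrise by the unit disk the ellipse with
semi-axes `r + b` and `r - b`. -/
noncomputable def ellipseMap (r b : ℝ) : ℂ →L[ℝ] ℂ :=
  r • ContinuousLinearMap.id ℝ ℂ + b • (conjCLE : ℂ →L[ℝ] ℂ)

/-- The Joukowski map `w ↦ r w + b w⁻¹`, the holomorphic counterpart of `ellipseMap`: the two agree
on the unit circle. -/
noncomputable def joukowski (r b : ℝ) (w : ℂ) : ℂ :=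
  r * w + b * w⁻¹

variable {p q r b c : ℝ} {w z : ℂ}

theorem continuous_ellipseForm : Continuous (ellipseForm p q) := by
  unfold ellipseForm
  fun_prop

theorem ellipseForm_nonneg : 0 ≤ ellipseForm p q z := by
  unfold ellipseForm
  positivity

theorem ellipseForm_pos (hp : p ≠ 0) (hq : q ≠ 0) (hz : z ≠ 0) : 0 < ellipseForm p q z := by
  unfold ellipseForm
  by_cases hre : z.re = 0
  · have him : z.im ≠ 0 := fun him ↦ hz (Complex.ext hre him)
    positivity
  · positivity

theorem ellipseForm_ofReal_mul (t : ℝ) :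
    ellipseForm p q (t * z) = t ^ 2 * ellipseForm p q z := by
  simp only [ellipseForm, re_ofReal_mul, im_ofReal_mul]
  ring

theorem mem_interior_closedEllipse_of_ellipseForm_lt_one (hz : ellipseForm p q z < 1) :
    z ∈ interior (closedEllipse p q) :=
  interior_maximal (fun _ hw ↦ le_of_lt hw)
    (isOpen_lt continuous_ellipseForm continuous_const) hz

theorem ofReal_mem_closedEllipse {x : ℝ} (hx : |x| ≤ p) : (x : ℂ) ∈ closedEllipse p q := by
  have hsq : x ^ 2 ≤ p ^ 2 := sq_le_sq' (abs_le.1 hx).1 (abs_le.1 hx).2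
  simpa [closedEllipse, ellipseForm] using div_le_one_of_le₀ hsq (sq_nonneg p)

theorem ellipseMap_apply (r b : ℝ) (w : ℂ) : ellipseMap r b w = r * w + b * conj w := by
  simp [ellipseMap]

theorem det_ellipseMap (r b : ℝ) : (ellipseMap r b).det = r ^ 2 - b ^ 2 := by
  have hmatrix : LinearMap.toMatrix basisOneI basisOneI (ellipseMap r b : ℂ →ₗ[ℝ] ℂ) =
      !![r + b, 0; 0, r - b] := by
    ext i j
    fin_cases i <;> fin_cases j <;>
      simp [LinearMap.toMatrix_apply, ellipseMap_apply, sub_eq_add_neg]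
  rw [ContinuousLinearMap.det, ← LinearMap.det_toMatrix basisOneI, hmatrix, Matrix.det_fin_two_of]
  ring

theorem ellipseForm_ellipseMap (hp : r + b ≠ 0) (hq : r - b ≠ 0) (w : ℂ) :
    ellipseForm (r + b) (r - b) (ellipseMap r b w) = ‖w‖ ^ 2 := by
  have hre : (ellipseMap r b w).re = (r + b) * w.re := by simp [ellipseMap_apply, add_mul]
  have him : (ellipseMap r b w).im = (r - b) * w.im := by
    simp [ellipseMap_apply, add_mul, sub_eq_add_neg]
  rw [← normSq_eq_norm_sq, normSq_apply, ellipseForm, hre, him]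
  field_simp

theorem bijective_ellipseMap (hp : r + b ≠ 0) (hq : r - b ≠ 0) :
    Function.Bijective (ellipseMap r b) := by
  have hdet : (ellipseMap r b : ℂ →ₗ[ℝ] ℂ).det ≠ 0 := by
    rw [← ContinuousLinearMap.det, det_ellipseMap, sq_sub_sq]
    exact mul_ne_zero hp hq
  exact (LinearMap.equivOfDetNeZero _ hdet).bijective

theorem ellipseMap_image_closedBall (hp : r + b ≠ 0) (hq : r - b ≠ 0) :
    ellipseMap r b '' closedBall 0 1 = closedEllipse (r + b) (r - b) := by
  have hpreimage : ellipseMap r b ⁻¹' closedEllipse (r + b) (r - b) = closedBall 0 1 := by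
    ext w
    rw [Set.mem_preimage, closedEllipse, Set.mem_ofPred_eq, ellipseForm_ellipseMap hp hq,
      sq_le_one_iff₀ (norm_nonneg w), mem_closedBall_zero_iff]
  rw [← hpreimage, Set.image_preimage_eq _ (bijective_ellipseMap hp hq).surjective]

theorem setIntegral_closedEllipse {E : Type*} [NormedAddCommGroup E] [NormedSpace ℝ E]
    (hp : r + b ≠ 0) (hq : r - b ≠ 0) (f : ℂ → E) :
    ∫ z in closedEllipse (r + b) (r - b), f z =
      |r ^ 2 - b ^ 2| • ∫ w in closedBall 0 1, f (ellipseMap r b w) := by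
  rw [← ellipseMap_image_closedBall hp hq,
    integral_image_eq_integral_abs_det_fderiv_smul volume measurableSet_closedBall
      (fun _ _ ↦ (ellipseMap r b).hasFDerivWithinAt) (bijective_ellipseMap hp hq).injective.injOn]
  simp only [det_ellipseMap, integral_smul]

theorem joukowski_eq_ellipseMap (hw : ‖w‖ = 1) : joukowski r b w = ellipseMap r b w := by
  rw [joukowski, ellipseMap_apply, inv_eq_conj hw]

theorem joukowski_focal_circle (hr : r ≠ 0) (hc₀ : c ≠ 0) (hc : c ^ 2 = 4 * r * b)
    (hw : ‖w‖ = 1) : joukowski r b ((c / (2 * r) : ℝ) * w) = (c * w.re : ℝ) := by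
  have hb : (b : ℂ) = c ^ 2 / (4 * r) := by
    rw [eq_div_iff (by simpa using hr)]
    exact_mod_cast (by linarith : b * (4 * r) = c ^ 2)
  have hre : (w.re : ℂ) = (w + w⁻¹) / 2 := by rw [inv_eq_conj hw, re_eq_add_conj]
  have hw₀ : w ≠ 0 := norm_ne_zero_iff.1 (by simp [hw])
  have hr' : (r : ℂ) ≠ 0 := ofReal_ne_zero.2 hr
  have hc₀' : (c : ℂ) ≠ 0 := ofReal_ne_zero.2 hc₀
  push_cast
  rw [joukowski, hb, hre]
  field_simp
  ring

theorem differentiableAt_joukowski (hw : w ≠ 0) : DifferentiableAt ℂ (joukowski r b) w := by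
  unfold joukowski
  fun_prop (disch := assumption)

theorem ellipseForm_joukowski (hp : r + b ≠ 0) (hq : r - b ≠ 0) (hw : w ≠ 0) :
    ellipseForm (r + b) (r - b) (joukowski r b w) =
      1 + (‖w‖ ^ 2 - 1) * ((r * ‖w‖) ^ 2 - b ^ 2) / ‖w‖ ^ 4 * ellipseForm (r + b) (r - b) w := by
  have hN : w.re ^ 2 + w.im ^ 2 ≠ 0 := by
    simpa only [normSq_apply, sq] using (normSq_pos.2 hw).ne'
  have hnorm : ‖w‖ ^ 2 = w.re ^ 2 + w.im ^ 2 := by rw [← normSq_eq_norm_sq, normSq_apply]; ring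
  have hre : (joukowski r b w).re = r * w.re + b * (w.re / (w.re ^ 2 + w.im ^ 2)) := by
    simp [joukowski, inv_re, normSq_apply, sq]
  have him : (joukowski r b w).im = r * w.im - b * (w.im / (w.re ^ 2 + w.im ^ 2)) := by
    simp [joukowski, inv_im, normSq_apply, sq, neg_div, sub_eq_add_neg]
  rw [ellipseForm, ellipseForm, hre, him, mul_pow, show 4 = 2 * 2 from rfl, pow_mul, hnorm]
  field_simp
  ring

theorem ellipseForm_joukowski_le_one (hp : r + b ≠ 0) (hq : r - b ≠ 0) (hw₀ : w ≠ 0)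
    (hw : ‖w‖ ≤ 1) (hbw : |b| ≤ r * ‖w‖) :
    ellipseForm (r + b) (r - b) (joukowski r b w) ≤ 1 := by
  have hN : ‖w‖ ^ 2 - 1 ≤ 0 := sub_nonpos.2 (pow_le_one₀ (norm_nonneg w) hw)
  have hb : 0 ≤ (r * ‖w‖) ^ 2 - b ^ 2 :=
    sub_nonneg.2 (sq_le_sq.2 (hbw.trans (le_abs_self _)))
  rw [ellipseForm_joukowski hp hq hw₀, add_le_iff_nonpos_right]
  exact mul_nonpos_of_nonpos_of_nonneg
    (div_nonpos_of_nonpos_of_nonneg (mul_nonpos_of_nonpos_of_nonneg hN hb) (by positivity))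
    ellipseForm_nonneg

theorem ellipseForm_joukowski_lt_one (hp : r + b ≠ 0) (hq : r - b ≠ 0)
    (hw : ‖w‖ < 1) (hbw : |b| < r * ‖w‖) :
    ellipseForm (r + b) (r - b) (joukowski r b w) < 1 := by
  have hw₀ : w ≠ 0 := by
    rintro rfl
    simpa using (abs_nonneg b).trans_lt hbw
  have hN : ‖w‖ ^ 2 - 1 < 0 := sub_neg.2 (pow_lt_one₀ (norm_nonneg w) hw two_ne_zero)
  have hb : 0 < (r * ‖w‖) ^ 2 - b ^ 2 :=
    sub_pos.2 (sq_lt_sq.2 (hbw.trans_le (le_abs_self _)))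
  rw [ellipseForm_joukowski hp hq hw₀, add_lt_iff_neg_left]
  exact mul_neg_of_neg_of_pos
    (div_neg_of_neg_of_pos (mul_neg_of_neg_of_pos hN hb) (by positivity))
    (ellipseForm_pos hp hq hw₀)

end Ellipse

section SemicircleAverage

open Complex Real Metric Set

variable {E : Type*} [NormedAddCommGroup E] [NormedSpace ℂ E] {f : ℂ → E} {r b c : ℝ}

theorem abs_lt_mul_of_focal_radius_le (hb : 0 < b) (hbr : b < r) (hc₀ : 0 < c)
    (hc : c ^ 2 = 4 * r * b) {ρ : ℝ} (hρ : c / (2 * r) ≤ ρ) : |b| < r * ρ := by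
  have hr : 0 < r := hb.trans hbr
  have hbc : 2 * b < c := lt_of_pow_lt_pow_left₀ 2 hc₀.le (by nlinarith)
  rw [div_le_iff₀ (by positivity)] at hρ
  rw [abs_of_pos hb]
  linarith

theorem focal_le_semiaxis (hp : 0 ≤ r + b) (hc : c ^ 2 = 4 * r * b) : c ≤ r + b :=
  le_of_sq_le_sq (by linarith [sq_nonneg (r - b)]) hp

theorem circleAverage_joukowski_eq (hb : 0 < b) (hbr : b < r) (hc₀ : 0 < c)
    (hc : c ^ 2 = 4 * r * b) (hf : ContinuousOn f (closedEllipse (r + b) (r - b)))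
    (hf' : DifferentiableOn ℂ f (interior (closedEllipse (r + b) (r - b))))
    {t : ℝ} (ht : t ^ 2 ≤ 1) :
    circleAverage (fun w ↦ f (t * joukowski r b w)) 0 1 =
      circleAverage (fun w ↦ f (t * joukowski r b w)) 0 (c / (2 * r)) := by
  have hr : 0 < r := hb.trans hbr
  have hp : r + b ≠ 0 := (add_pos hr hb).ne'
  have hq : r - b ≠ 0 := (sub_pos.2 hbr).ne'
  have hρ₀ : 0 < c / (2 * r) := by positivity
  have hρ₁ : c / (2 * r) ≤ 1 := by
    rw [div_le_one (by positivity)]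
    linarith [focal_le_semiaxis (add_pos hr hb).le hc]
  have hbw {w : ℂ} (hw : c / (2 * r) ≤ ‖w‖) : |b| < r * ‖w‖ :=
    abs_lt_mul_of_focal_radius_le hb hbr hc₀ hc hw
  have hdiff {w : ℂ} (hw : c / (2 * r) ≤ ‖w‖) :
      DifferentiableAt ℂ (fun w ↦ (t : ℂ) * joukowski r b w) w :=
    (differentiableAt_joukowski (norm_pos_iff.1 (hρ₀.trans_le hw))).const_mul _
  apply circleAverage_eq_of_differentiableOn_annulus hρ₀ hρ₁
  · refine hf.comp (fun w hw ↦ ?_) fun w hw ↦ ?_ <;>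
      rw [mem_sdiff, mem_closedBall_zero_iff, mem_ball_zero_iff, not_lt] at hw
    · exact (hdiff hw.2).continuousAt.continuousWithinAt
    · rw [closedEllipse, mem_ofPred_eq, ellipseForm_ofReal_mul]
      exact mul_le_one₀ ht ellipseForm_nonneg (ellipseForm_joukowski_le_one hp hq
        (norm_pos_iff.1 (hρ₀.trans_le hw.2)) hw.1 (hbw hw.2).le)
  · refine hf'.comp (fun w hw ↦ ?_) fun w hw ↦ ?_ <;>
      rw [mem_sdiff, mem_ball_zero_iff, mem_closedBall_zero_iff, not_le] at hw
    · exact (hdiff hw.2.le).differentiableWithinAt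
    · refine mem_interior_closedEllipse_of_ellipseForm_lt_one ?_
      rw [ellipseForm_ofReal_mul]
      exact mul_lt_one_of_nonneg_of_lt_one_right ht ellipseForm_nonneg
        (ellipseForm_joukowski_lt_one hp hq hw.1 (hbw hw.2.le))

theorem circleAverage_comp_ellipseMap (hb : 0 < b) (hbr : b < r) (hc₀ : 0 < c)
    (hc : c ^ 2 = 4 * r * b) (hf : ContinuousOn f (closedEllipse (r + b) (r - b)))
    (hf' : DifferentiableOn ℂ f (interior (closedEllipse (r + b) (r - b))))
    {t : ℝ} (ht : t ^ 2 ≤ 1) :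
    circleAverage (fun w ↦ f (ellipseMap r b w)) 0 t =
      circleAverage (fun w ↦ f (c * w.re : ℝ)) 0 t := by
  have hr : 0 < r := hb.trans hbr
  have hnorm {w : ℂ} (hw : w ∈ sphere 0 |1|) : ‖w‖ = 1 := by simpa using hw
  calc circleAverage (fun w ↦ f (ellipseMap r b w)) 0 t
    _ = circleAverage (fun w ↦ f (t * joukowski r b w)) 0 1 := by
      rw [circleAverage_eq_circleAverage_zero_one]
      refine circleAverage_congr_sphere fun w hw ↦ ?_
      rw [joukowski_eq_ellipseMap (hnorm hw), add_zero, ← real_smul, ← real_smul, map_smul]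
    _ = circleAverage (fun w ↦ f (t * joukowski r b w)) 0 (c / (2 * r)) :=
      circleAverage_joukowski_eq hb hbr hc₀ hc hf hf' ht
    _ = circleAverage (fun w ↦ f (c * w.re : ℝ)) 0 t := by
      rw [circleAverage_eq_circleAverage_zero_one, circleAverage_eq_circleAverage_zero_one (R := t)]
      refine circleAverage_congr_sphere fun w hw ↦ ?_
      simp only [add_zero, joukowski_focal_circle hr.ne' hc₀.ne' hc (hnorm hw), re_ofReal_mul,
        ← ofReal_mul, mul_left_comm]

theorem setIntegral_closedBall_comp_ellipseMap (hb : 0 < b) (hbr : b < r) (hc₀ : 0 < c)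
    (hc : c ^ 2 = 4 * r * b) (hf : ContinuousOn f (closedEllipse (r + b) (r - b)))
    (hf' : DifferentiableOn ℂ f (interior (closedEllipse (r + b) (r - b)))) :
    ∫ w in closedBall 0 1, f (ellipseMap r b w) =
      ∫ w in closedBall (0 : ℂ) 1, f (c * w.re : ℝ) := by
  have hr : 0 < r := hb.trans hbr
  have hmap : MapsTo (ellipseMap r b) (closedBall 0 1) (closedEllipse (r + b) (r - b)) :=
    image_subset_iff.1
      (ellipseMap_image_closedBall (add_pos hr hb).ne' (sub_pos.2 hbr).ne').subset
  have hfocal : MapsTo (fun w : ℂ ↦ ((c * w.re : ℝ) : ℂ)) (closedBall 0 1)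
      (closedEllipse (r + b) (r - b)) := fun w hw ↦ ofReal_mem_closedEllipse <|
    calc |c * w.re| = c * |w.re| := by rw [abs_mul, abs_of_pos hc₀]
      _ ≤ c * 1 := by gcongr; exact (abs_re_le_norm w).trans (mem_closedBall_zero_iff.1 hw)
      _ ≤ r + b := by linarith [focal_le_semiaxis (add_pos hr hb).le hc]
  have hcompact : IsCompact (closedBall (0 : ℂ) 1) := isCompact_closedBall 0 1
  have hint : IntegrableOn (fun w ↦ f (ellipseMap r b w)) (closedBall 0 1) :=
    (hf.comp (ellipseMap r b).continuous.continuousOn hmap).integrableOn_compact hcompact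
  have hintfocal : IntegrableOn (fun w : ℂ ↦ f (c * w.re : ℝ)) (closedBall 0 1) :=
    (hf.comp (by fun_prop) hfocal).integrableOn_compact hcompact
  rw [setIntegral_closedBall_eq_integral_circleAverage hint,
    setIntegral_closedBall_eq_integral_circleAverage hintfocal]
  refine setIntegral_congr_fun measurableSet_Ioc fun t ht ↦ ?_
  simp only [circleAverage_comp_ellipseMap hb hbr hc₀ hc hf hf' (pow_le_one₀ ht.1.le ht.2)]

end SemicircleAverage

theorem stmt_10_general {E : Type*} [NormedAddCommGroup E] [NormedSpace ℂ E] [CompleteSpace E]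
    (r b : ℝ) (hb : 0 < b) (hbr : b < r)
    (c : ℝ) (hc : c = 2 * Real.sqrt (r * b)) (D : Set ℂ)
    (hD : D = {z : ℂ | z.re ^ 2 / (r + b) ^ 2 + z.im ^ 2 / (r - b) ^ 2 ≤ 1})
    (f : ℂ → E) (hf : ContinuousOn f D) (hf' : DifferentiableOn ℂ f (interior D)) :
    (Real.pi * (r ^ 2 - b ^ 2))⁻¹ • ∫ z in D, f z =
      (2 * Real.pi * r * b)⁻¹ • ∫ x in (-c)..c, Real.sqrt (c ^ 2 - x ^ 2) • f x := by
  have hr : 0 < r := hb.trans hbr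
  have hp : 0 < r + b := add_pos hr hb
  have hq : 0 < r - b := sub_pos.2 hbr
  have hc₀ : 0 < c := by rw [hc]; positivity
  have hc₂ : c ^ 2 = 4 * r * b := by rw [hc, mul_pow, Real.sq_sqrt (by positivity)]; ring
  have harea : 0 < r ^ 2 - b ^ 2 := by rw [sq_sub_sq]; positivity
  obtain rfl : D = closedEllipse (r + b) (r - b) := hD
  have hfc : ContinuousOn (fun x : ℝ ↦ f x) (Set.Icc (-c) c) :=
    hf.comp Complex.continuous_ofReal.continuousOn fun x hx ↦
      ofReal_mem_closedEllipse ((abs_le.2 hx).trans (focal_le_semiaxis hp.le hc₂))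
  rw [setIntegral_closedEllipse hp.ne' hq.ne',
    setIntegral_closedBall_comp_ellipseMap hb hbr hc₀ hc₂ hf hf',
    setIntegral_closedBall_comp_mul_re hc₀ hfc, hc₂, abs_of_pos harea, smul_smul, smul_smul]
  congr 1
  field_simp
  norm_num

/-- For the closed ellipse `D` with semi-axes `r+b` and `r−b`
(`0 < b < r`) and `c = 2√(rb)`, the mean over `D` of any function `f` holomorphic on
an open set containing `D` equals its semicircle average on `[−c, c]`:
`(1/(π(r²−b²))) ∫_D f dA = (1/(2πrb)) ∫_{−c}^{c} f(x)√(c²−x²) dx`. -/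
theorem stmt_10 (r b : ℝ) (hb : 0 < b) (hbr : b < r)
    (c : ℝ) (hc : c = 2 * Real.sqrt (r * b))
    (D : Set ℂ)
    (hD : D = {z : ℂ | z.re ^ 2 / (r + b) ^ 2 + z.im ^ 2 / (r - b) ^ 2 ≤ 1})
    (f : ℂ → ℂ) (U : Set ℂ) (hU : IsOpen U) (hDU : D ⊆ U)
    (hf : DifferentiableOn ℂ f U) :
    ((Real.pi * (r ^ 2 - b ^ 2) : ℝ) : ℂ)⁻¹ * ∫ z in D, f z
      = ((2 * Real.pi * r * b : ℝ) : ℂ)⁻¹ *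
          ∫ x in (-c)..c, f (x : ℂ) * ((Real.sqrt (c ^ 2 - x ^ 2) : ℝ) : ℂ) := by
  have hfD : ContinuousOn f D := hf.continuousOn.mono hDU
  have hfD' : DifferentiableOn ℂ f (interior D) := hf.mono (interior_subset.trans hDU)
  simpa only [Complex.real_smul, Complex.ofReal_inv, mul_comm (Complex.ofReal _) (f _)] using
    stmt_10_general r b hb hbr c hc D hD f hfD hfD'
end

section
/- Let r > 0 and let a₂ be a real number with a₂ > r/2. Then the map h(w) = r·w + a₂·w^(−2) is not injective on the unit circle: there exists θ ∈ (0, π) with h(e^{iθ}) = h(e^{−iθ}) while e^{iθ} ≠ e^{−iθ}. (Hence the degree-2 polynomial curve parametrized by h fails to be a simple curve when a₂ > r/2.) -/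
/-! On conjugate points of the unit circle,
`h(e^{iθ}) - h(e^{-iθ}) = 2i · sin θ · (r - 2 a₂ cos θ)`. Hence the curve crosses itself at any
`θ ∈ (0, π)` with `cos θ = r / (2 a₂)`, and such a `θ` exists as soon as `|r| < 2 |a₂|`. -/

/-- The parametrization `h(w) = r·w + a·w⁻²` of a degree-2 polynomial curve, where `a` is the
coefficient `a₂`. It is only meaningful for `w ≠ 0`; its junk value at `0` is `0`. -/
def degreeTwoCurve {K : Type*} [Field K] (r a w : K) : K :=
  r * w + a * w ^ (-2 : ℤ)

theorem degreeTwoCurve_sub_degreeTwoCurve_inv {K : Type*} [Field K] (r a w : K) :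
    degreeTwoCurve r a w - degreeTwoCurve r a w⁻¹ = (w - w⁻¹) * (r - a * (w + w⁻¹)) := by
  simp only [degreeTwoCurve, zpow_neg, zpow_ofNat, inv_pow, inv_inv]
  ring

section Complex

open Complex

theorem exp_mul_I_sub_exp_neg_mul_I (z : ℂ) :
    exp (z * I) - exp (-z * I) = 2 * sin z * I := by
  rw [two_sin, mul_assoc, I_mul_I]
  ring

theorem exp_mul_I_eq_exp_neg_mul_I_iff {z : ℂ} :
    exp (z * I) = exp (-z * I) ↔ sin z = 0 := by
  rw [← sub_eq_zero, exp_mul_I_sub_exp_neg_mul_I]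
  simp

theorem degreeTwoCurve_exp_sub_degreeTwoCurve_exp_neg (r a z : ℂ) :
    degreeTwoCurve r a (exp (z * I)) - degreeTwoCurve r a (exp (-z * I)) =
      2 * sin z * I * (r - a * (2 * cos z)) := by
  have exp_neg_eq_inv : exp (-z * I) = (exp (z * I))⁻¹ := by rw [neg_mul, exp_neg]
  rw [← exp_mul_I_sub_exp_neg_mul_I, two_cos, exp_neg_eq_inv,
    degreeTwoCurve_sub_degreeTwoCurve_inv]

end Complex

theorem exists_mem_Ioo_eq_mul_two_mul_cos {r a : ℝ} (h : |r| < 2 * |a|) :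
    ∃ θ ∈ Set.Ioo 0 Real.pi, r = a * (2 * Real.cos θ) := by
  have ha : a ≠ 0 := abs_pos.mp (by linarith [abs_nonneg r])
  have ratio_mem : r / (2 * a) ∈ Set.Ioo (-1) 1 := by
    rw [Set.mem_Ioo, ← abs_lt, abs_div, abs_mul, abs_two, div_lt_one (by positivity)]
    exact h
  refine ⟨Real.arccos (r / (2 * a)),
    ⟨Real.arccos_pos.mpr ratio_mem.2, Real.arccos_lt_pi.mpr ratio_mem.1⟩, ?_⟩
  rw [Real.cos_arccos ratio_mem.1.le ratio_mem.2.le]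
  field_simp

theorem stmt_15_general {r a : ℝ} (h : |r| < 2 * |a|) :
    ∃ θ ∈ Set.Ioo (0 : ℝ) Real.pi,
      degreeTwoCurve (r : ℂ) a (Complex.exp (θ * Complex.I)) =
        degreeTwoCurve (r : ℂ) a (Complex.exp (-θ * Complex.I)) ∧
      Complex.exp (θ * Complex.I) ≠ Complex.exp (-θ * Complex.I) := by
  obtain ⟨θ, hθ, hr⟩ := exists_mem_Ioo_eq_mul_two_mul_cos h
  have hr' : (r : ℂ) = a * (2 * Complex.cos θ) := mod_cast hr
  have sin_ne_zero : Complex.sin θ ≠ 0 := mod_cast (Real.sin_pos_of_mem_Ioo hθ).ne'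
  refine ⟨θ, hθ, ?_, exp_mul_I_eq_exp_neg_mul_I_iff.not.mpr sin_ne_zero⟩
  rw [← sub_eq_zero, degreeTwoCurve_exp_sub_degreeTwoCurve_exp_neg, sub_eq_zero.mpr hr', mul_zero]

/-- For real `a₂ > r/2 > 0`, the degree-2 parametrization
`h(w) = r·w + a₂·w^(−2)` is not injective on the unit circle: there is `θ ∈ (0, π)`
with `h(e^{iθ}) = h(e^{−iθ})` while `e^{iθ} ≠ e^{−iθ}`. -/
theorem stmt_15 (r a₂ : ℝ) (hr : 0 < r) (ha : r / 2 < a₂) :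
    ∃ θ ∈ Set.Ioo (0 : ℝ) Real.pi,
      ((r : ℂ) * Complex.exp ((θ : ℂ) * Complex.I)
          + (a₂ : ℂ) * (Complex.exp ((θ : ℂ) * Complex.I)) ^ (-2 : ℤ)
        = (r : ℂ) * Complex.exp (-(θ : ℂ) * Complex.I)
          + (a₂ : ℂ) * (Complex.exp (-(θ : ℂ) * Complex.I)) ^ (-2 : ℤ)) ∧
      Complex.exp ((θ : ℂ) * Complex.I) ≠ Complex.exp (-(θ : ℂ) * Complex.I) := by
  have ha₂ : 0 < a₂ := by linarith
  exact stmt_15_general (by rw [abs_of_pos hr, abs_of_pos ha₂]; linarith)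
end
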